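/- Let X be a Hilbert space, σ > 0, and T : X ⇉ X with closed graph around (x̄, v̄) ∈ gph T. Then T is locally strongly maximal monotone around (x̄, v̄) with modulus σ if and only if T is locally hypomonotone around (x̄, v̄) and there is a neighborhood W of (x̄, v̄) such that ⟨z, w⟩ ≥ σ‖w‖² whenever z ∈ D̂*T(u, v)(w) and (u, v) ∈ gph T ∩ W. -/

import Mathlib

open Set Filter Topology RealInnerProductSpace

variable {X : Type*} [NormedAddCommGroup X] [InnerProductSpace ℝ X] [CompleteSpace X]

/-- Graph of a set-valued map. -/
def gph (T : X → Set X) : Set (X × X) := {p | p.2 ∈ T p.1}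

/-- Monotone set-valued operator on a Hilbert space. -/
def Mono (T : X → Set X) : Prop :=
  ∀ p ∈ gph T, ∀ q ∈ gph T, 0 ≤ ⟪p.2 - q.2, p.1 - q.1⟫

/-- Maximal monotone operator. -/
def MaxMono (T : X → Set X) : Prop :=
  Mono T ∧ ∀ S : X → Set X, Mono S → gph T ⊆ gph S → gph S = gph T

/-- σ-strongly monotone operator. -/
def StrMono (σ : ℝ) (T : X → Set X) : Prop :=
  ∀ p ∈ gph T, ∀ q ∈ gph T, σ * ‖p.1 - q.1‖ ^ 2 ≤ ⟪p.2 - q.2, p.1 - q.1⟫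

/-- σ-strongly maximal monotone operator. -/
def StrMaxMono (σ : ℝ) (T : X → Set X) : Prop :=
  StrMono σ T ∧ ∀ S : X → Set X, StrMono σ S → gph T ⊆ gph S → gph S = gph T

/-- Monotone with respect to a set `W ⊆ X × X`. -/
def MonoOn' (T : X → Set X) (W : Set (X × X)) : Prop :=
  ∀ p ∈ gph T ∩ W, ∀ q ∈ gph T ∩ W, 0 ≤ ⟪p.2 - q.2, p.1 - q.1⟫

/-- σ-strongly monotone with respect to a set `W ⊆ X × X`. -/
def StrMonoOn' (σ : ℝ) (T : X → Set X) (W : Set (X × X)) : Prop :=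
  ∀ p ∈ gph T ∩ W, ∀ q ∈ gph T ∩ W, σ * ‖p.1 - q.1‖ ^ 2 ≤ ⟪p.2 - q.2, p.1 - q.1⟫

/-- Locally maximal monotone of type (A) with respect to `W`. -/
def LocMaxA (T : X → Set X) (W : Set (X × X)) : Prop :=
  MonoOn' T W ∧ ∀ S : X → Set X, MonoOn' S W → gph T ∩ W ⊆ gph S ∩ W →
    gph S ∩ W = gph T ∩ W

/-- Locally maximal monotone of type (A) around a graph point. -/
def LocMaxAAt (T : X → Set X) (x v : X) : Prop :=
  ∃ U ∈ 𝓝 x, ∃ V ∈ 𝓝 v, LocMaxA T (U ×ˢ V)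

/-- Locally maximal monotone of type (B) around a graph point. -/
def LocMaxBAt (T : X → Set X) (x v : X) : Prop :=
  ∃ U ∈ 𝓝 x, ∃ V ∈ 𝓝 v, ∃ G : X → Set X, MaxMono G ∧
    gph G ∩ U ×ˢ V = gph T ∩ U ×ˢ V

/-- Locally monotone around a graph point. -/
def LocMonoAt (T : X → Set X) (x v : X) : Prop :=
  ∃ U ∈ 𝓝 x, ∃ V ∈ 𝓝 v, ∃ G : X → Set X, Mono G ∧
    gph G ∩ U ×ˢ V = gph T ∩ U ×ˢ V

/-- Locally strongly maximal monotone of type (A) around a graph point with modulus σ. -/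
def LocStrMaxAAt (σ : ℝ) (T : X → Set X) (x v : X) : Prop :=
  ∃ U ∈ 𝓝 x, ∃ V ∈ 𝓝 v, StrMonoOn' σ T (U ×ˢ V) ∧
    ∀ S : X → Set X, MonoOn' S (U ×ˢ V) → gph T ∩ U ×ˢ V ⊆ gph S ∩ U ×ˢ V →
      gph S ∩ U ×ˢ V = gph T ∩ U ×ˢ V

/-- Locally strongly maximal monotone of type (B) around a graph point with modulus σ. -/
def LocStrMaxBAt (σ : ℝ) (T : X → Set X) (x v : X) : Prop :=
  ∃ U ∈ 𝓝 x, ∃ V ∈ 𝓝 v, ∃ G : X → Set X, StrMaxMono σ G ∧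
    gph G ∩ U ×ˢ V = gph T ∩ U ×ˢ V

/-- Pointwise sum of set-valued maps. -/
def addMap (T S : X → Set X) : X → Set X :=
  fun x => {v | ∃ a ∈ T x, ∃ b ∈ S x, v = a + b}

/-- The shift `T + σ I`. -/
def shiftI (σ : ℝ) (T : X → Set X) : X → Set X :=
  fun x => (fun v => v + σ • x) '' T x

/-- Set-valued inverse. -/
def invMap (T : X → Set X) : X → Set X := fun v => {x | v ∈ T x}

/-- Resolvent `(I + λ T)⁻¹` as a set-valued map. -/
def res (lam : ℝ) (T : X → Set X) : X → Set X :=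
  fun y => {x | ∃ v ∈ T x, y = x + lam • v}

/-- `F` has a single-valued localization around `(ȳ, x̄) ∈ gph F`. -/
def HasSVLoc (F : X → Set X) (ybar xbar : X) : Prop :=
  ∃ W ∈ 𝓝 ybar, ∃ Q ∈ 𝓝 xbar, ∃ f : X → X, (∀ y ∈ W, f y ∈ Q) ∧
    ∀ y x, (x ∈ F y ∧ y ∈ W ∧ x ∈ Q) ↔ (y ∈ W ∧ x = f y)

/-- `F` has a continuous single-valued localization around `(ȳ, x̄) ∈ gph F`. -/
def HasCSVLoc (F : X → Set X) (ybar xbar : X) : Prop :=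
  ∃ W ∈ 𝓝 ybar, ∃ Q ∈ 𝓝 xbar, ∃ f : X → X, ContinuousOn f W ∧ (∀ y ∈ W, f y ∈ Q) ∧
    ∀ y x, (x ∈ F y ∧ y ∈ W ∧ x ∈ Q) ↔ (y ∈ W ∧ x = f y)

/-- Hypomonotone with modulus `r` with respect to `W`. -/
def HypoOn (r : ℝ) (T : X → Set X) (W : Set (X × X)) : Prop :=
  ∀ p ∈ gph T ∩ W, ∀ q ∈ gph T ∩ W,
    -(r * ‖p.1 - q.1‖ ^ 2) ≤ ⟪p.2 - q.2, p.1 - q.1⟫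

/-- Locally hypomonotone with modulus `r` around a graph point. -/
def LocHypoAt (r : ℝ) (T : X → Set X) (x v : X) : Prop :=
  ∃ W ∈ 𝓝 ((x, v) : X × X), HypoOn r T W

/-- The regular (Fréchet) normal cone to `Ω ⊆ X × X` at `p`, using the sum norm. -/
def rnc (Ω : Set (X × X)) (p : X × X) : Set (X × X) :=
  {q | ∀ ε > 0, ∀ᶠ u in 𝓝[Ω] p,
    ⟪q.1, u.1 - p.1⟫ + ⟪q.2, u.2 - p.2⟫ ≤ ε * (‖u.1 - p.1‖ + ‖u.2 - p.2‖)}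

/-- The regular coderivative of `F` at `(x, v) ∈ gph F` applied to `w`. -/
def coderiv (F : X → Set X) (x v w : X) : Set X :=
  {z | ((z, -w) : X × X) ∈ rnc (gph F) (x, v)}

/-- The graph of `T` is locally closed around `p`. -/
def LocClosedAt (Ω : Set (X × X)) (p : X × X) : Prop :=
  ∃ ε > 0, IsClosed (Ω ∩ Metric.closedBall p ε)

/-!
If `T` agrees near `(x̄, v̄)` with a `σ`-strongly maximal monotone operator `G`, hypomonotonicity is
clear. By Minty's theorem, here a consequence of the one-point Kirszbraun extension, every `y` is of
the form `v + (1 - σ) x` with `v ∈ G x`, so the graph of `G` can be followed from any of its points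
while `v + (1 - σ) x` moves in a prescribed direction; testing a regular normal along the right
direction gives the coderivative bound.

Conversely, let `μ` be large. Hypomonotonicity makes `y = v + μ x` a bi-Lipschitz coordinate on the
graph `Ω` of `T` near `(x̄, v̄)`. The coderivative bound forces the proximal normals to the image of
`Ω` in this coordinate to vanish, so that the image is open and `x` becomes a Lipschitz function
`f` of `y` on a ball. The bound then says that the proximal subgradients `w` of `⟪q, f ·⟫` satisfy
`(σ + μ) ‖w‖² ≤ ⟪q, w⟫`, and by a mean value inequality `f` is `(σ + μ)`-cocoercive, which is
`σ`-strong monotonicity of `Ω`. A maximal extension of `Ω` adds no points near `(x̄, v̄)`, because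
there the coordinate `y` already takes all values on `Ω` and is injective on the extension. Both
the openness and the mean value inequality come from a smooth variational principle: quadratic
perturbations for which a lower semicontinuous function attains its minimum are dense.
-/

section Minty

variable {E F : Type*} [NormedAddCommGroup E] [InnerProductSpace ℝ E]
  [NormedAddCommGroup F] [InnerProductSpace ℝ F]

lemma norm_sub_le_norm_add_iff_inner_nonneg (a b : E) : ‖a - b‖ ≤ ‖a + b‖ ↔ 0 ≤ ⟪a, b⟫ := by
  rw [← sq_le_sq₀ (norm_nonneg _) (norm_nonneg _), norm_add_sq_real, norm_sub_sq_real]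
  constructor <;> intro h <;> linarith

lemma nonpos_of_forall_mul_le_sq_mul {A B : ℝ}
    (h : ∀ t ∈ Ioc (0 : ℝ) 1, t * A ≤ t ^ 2 * B) : A ≤ 0 := by
  have hlim : Tendsto (fun t : ℝ => t * B) (𝓝[>] 0) (𝓝 0) := by
    have hcont : Continuous fun t : ℝ => t * B := by fun_prop
    exact (hcont.tendsto' 0 0 (zero_mul B)).mono_left nhdsWithin_le_nhds
  refine ge_of_tendsto hlim ?_
  filter_upwards [Ioc_mem_nhdsGT (zero_lt_one' ℝ)] with t ht
  refine le_of_mul_le_mul_left ?_ ht.1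
  linarith [h t ht]

lemma sum_mul_mul_norm_sub_sq {ι : Type*} [Fintype ι] (n : ι → E) {l : ι → ℝ}
    (hl : ∑ i, l i = 1) :
    ∑ i, ∑ j, l i * l j * ‖n i - n j‖ ^ 2 =
      2 * (∑ i, l i * ‖n i‖ ^ 2 - ‖∑ i, l i • n i‖ ^ 2) := by
  have hleft : ∑ i, ∑ j, l i * l j * ‖n i‖ ^ 2 = ∑ i, l i * ‖n i‖ ^ 2 := by
    simp_rw [← Finset.sum_mul, ← Finset.mul_sum, hl, mul_one]
  have hright : ∑ i, ∑ j, l i * l j * ‖n j‖ ^ 2 = ∑ i, l i * ‖n i‖ ^ 2 := by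
    simp_rw [mul_assoc, ← Finset.mul_sum, ← Finset.sum_mul, hl, one_mul]
  have hcross : ∑ i, ∑ j, l i * l j * ⟪n i, n j⟫ = ‖∑ i, l i • n i‖ ^ 2 := by
    simp_rw [← real_inner_self_eq_norm_sq, sum_inner, inner_sum, real_inner_smul_left,
      real_inner_smul_right, mul_assoc]
  calc ∑ i, ∑ j, l i * l j * ‖n i - n j‖ ^ 2
      = ∑ i, ∑ j, (l i * l j * ‖n i‖ ^ 2 + l i * l j * ‖n j‖ ^ 2
          - 2 * (l i * l j * ⟪n i, n j⟫)) := by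
        refine Finset.sum_congr rfl fun i _ => Finset.sum_congr rfl fun j _ => ?_
        rw [norm_sub_sq_real]; ring
    _ = 2 * (∑ i, l i * ‖n i‖ ^ 2 - ‖∑ i, l i • n i‖ ^ 2) := by
        simp_rw [Finset.sum_sub_distrib, Finset.sum_add_distrib, ← Finset.mul_sum, hleft, hright,
          hcross]
        ring

/-- The Lagrangian dual of minimizing `max_k (‖p - n k‖ ^ 2 - c k)` over `p`, as a function of the
multipliers `l` in the standard simplex. -/
def ballsDual {ι : Type*} [Fintype ι] (n : ι → E) (c l : ι → ℝ) : ℝ :=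
  ∑ i, l i * (‖n i‖ ^ 2 - c i) - ‖∑ i, l i • n i‖ ^ 2

lemma ballsDual_segment {ι : Type*} [Fintype ι] [DecidableEq ι] (n : ι → E) (c l : ι → ℝ) (k : ι)
    (t : ℝ) :
    ballsDual n c ((1 - t) • l + t • Pi.single k 1) =
      ballsDual n c l + t * (‖∑ i, l i • n i - n k‖ ^ 2 - c k - ballsDual n c l)
        - t ^ 2 * ‖∑ i, l i • n i - n k‖ ^ 2 := by
  set p := ∑ i, l i • n i with hp
  have hlin : ∑ i, ((1 - t) • l + t • Pi.single k 1 : ι → ℝ) i * (‖n i‖ ^ 2 - c i) =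
      (1 - t) * ∑ i, l i * (‖n i‖ ^ 2 - c i) + t * (‖n k‖ ^ 2 - c k) := by
    simp [add_mul, Finset.sum_add_distrib, mul_assoc, ← Finset.mul_sum, Pi.single_apply]
  have hbary : ∑ i, ((1 - t) • l + t • Pi.single k 1 : ι → ℝ) i • n i = p - t • (p - n k) := by
    have : ∑ i, ((1 - t) • l + t • Pi.single k 1 : ι → ℝ) i • n i = (1 - t) • p + t • n k := by
      simp [add_smul, Finset.sum_add_distrib, mul_smul, ← Finset.smul_sum, Pi.single_apply, hp]
    rw [this]; module
  rw [ballsDual, ballsDual, ← hp, hlin, hbary, norm_sub_sq_real p, norm_smul, mul_pow,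
    Real.norm_eq_abs, sq_abs, real_inner_smul_right, norm_sub_sq_real p, inner_sub_right,
    real_inner_self_eq_norm_sq]
  ring

lemma exists_mem_stdSimplex_forall_norm_sub_sq_le {ι : Type*} [Fintype ι] [Nonempty ι]
    (n : ι → E) (c : ι → ℝ) :
    ∃ l ∈ stdSimplex ℝ ι, ∀ k, ‖∑ i, l i • n i - n k‖ ^ 2 - c k ≤ ballsDual n c l := by
  classical
  have hcont : Continuous (ballsDual n c) := by unfold ballsDual; fun_prop
  obtain ⟨l, hl, hmax⟩ := (isCompact_stdSimplex ℝ ι).exists_isMaxOn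
    ⟨_, single_mem_stdSimplex ℝ (Classical.arbitrary ι)⟩ hcont.continuousOn
  refine ⟨l, hl, fun k => sub_nonpos.1 <|
    nonpos_of_forall_mul_le_sq_mul (B := ‖∑ i, l i • n i - n k‖ ^ 2) fun t ht => ?_⟩
  have hle : ballsDual n c ((1 - t) • l + t • Pi.single k 1) ≤ ballsDual n c l :=
    hmax (convex_stdSimplex ℝ ι hl (single_mem_stdSimplex ℝ k) (by linarith [ht.2]) ht.1.le
      (by ring))
  rw [ballsDual_segment] at hle
  linarith

lemma exists_forall_norm_sub_le_of_norm_sub_le_norm_sub {ι : Type*} [Finite ι] [Nonempty ι]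
    {n : ι → E} {s : ι → F} (h : ∀ i j, ‖n i - n j‖ ≤ ‖s i - s j‖) :
    ∃ p, ∀ i, ‖p - n i‖ ≤ ‖s i‖ := by
  have := Fintype.ofFinite ι
  obtain ⟨l, ⟨hl_nonneg, hl_sum⟩, hopt⟩ :=
    exists_mem_stdSimplex_forall_norm_sub_sq_le n fun i => ‖s i‖ ^ 2
  refine ⟨∑ i, l i • n i, fun k => ?_⟩
  have hvar : ∑ i, ∑ j, l i * l j * ‖n i - n j‖ ^ 2 ≤ ∑ i, ∑ j, l i * l j * ‖s i - s j‖ ^ 2 := by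
    gcongr with i _ j _
    · exact mul_nonneg (hl_nonneg i) (hl_nonneg j)
    · exact h i j
  have hdual : ballsDual n (fun i => ‖s i‖ ^ 2) l ≤ 0 := by
    rw [sum_mul_mul_norm_sub_sq n hl_sum, sum_mul_mul_norm_sub_sq s hl_sum] at hvar
    simp only [ballsDual, mul_sub, Finset.sum_sub_distrib]
    linarith [sq_nonneg ‖∑ i, l i • s i‖]
  exact (sq_le_sq₀ (norm_nonneg _) (norm_nonneg _)).1 (by linarith [hopt k])

lemma exists_forall_norm_sub_le_of_forall_finset {ι : Type*} {n : ι → X} {r : ι → ℝ}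
    (h : ∀ J : Finset ι, ∃ p, ∀ i ∈ J, ‖p - n i‖ ≤ r i) : ∃ p, ∀ i, ‖p - n i‖ ≤ r i := by
  classical
  rcases isEmpty_or_nonempty ι with hι | ⟨⟨i₀⟩⟩
  · exact ⟨0, hι.elim⟩
  let K : ι → Set (WeakDual ℝ X) := fun i =>
    WeakDual.toStrongDual ⁻¹' Metric.closedBall (InnerProductSpace.toDual ℝ X (n i)) (r i)
  have mem_K_iff (p : X) (i : ι) :
      StrongDual.toWeakDual (InnerProductSpace.toDual ℝ X p) ∈ K i ↔ ‖p - n i‖ ≤ r i := by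
    simp only [K, mem_preimage, mem_closedBall_iff_norm]
    rw [← LinearIsometryEquiv.norm_map (InnerProductSpace.toDual ℝ X) (p - n i), map_sub]
    rfl
  have hK : IsCompact (K i₀) := WeakDual.isCompact_closedBall _ _
  obtain ⟨f, -, hf⟩ := hK.inter_iInter_nonempty K
    (fun _ => WeakDual.isClosed_closedBall _ _) fun J => by
      obtain ⟨p, hp⟩ := h (insert i₀ J)
      refine ⟨_, (mem_K_iff p i₀).2 (hp _ (by simp)), mem_iInter₂.2 fun i hi => ?_⟩
      exact (mem_K_iff p i).2 (hp _ (by simp [hi]))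
  refine ⟨(InnerProductSpace.toDual ℝ X).symm (WeakDual.toStrongDual f), fun i => ?_⟩
  rw [← mem_K_iff, LinearIsometryEquiv.apply_symm_apply]
  exact mem_iInter.1 hf i

/-- `σ`-strong monotonicity of a subset of `E × E`, the graph counterpart of `StrMono`. Negative
moduli are allowed and encode hypomonotonicity. -/
def IsStrMono (σ : ℝ) (M : Set (E × E)) : Prop :=
  ∀ p ∈ M, ∀ q ∈ M, σ * ‖p.1 - q.1‖ ^ 2 ≤ ⟪p.2 - q.2, p.1 - q.1⟫

lemma IsStrMono.mono {σ : ℝ} {M N : Set (E × E)} (hN : IsStrMono σ N) (h : M ⊆ N) :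
    IsStrMono σ M :=
  fun p hp q hq => hN p (h hp) q (h hq)

lemma IsStrMono.mono_modulus {σ τ : ℝ} {M : Set (E × E)} (hM : IsStrMono σ M) (h : τ ≤ σ) :
    IsStrMono τ M :=
  fun p hp q hq => (by gcongr : τ * ‖p.1 - q.1‖ ^ 2 ≤ _).trans (hM p hp q hq)

lemma IsStrMono.insert_of_forall {σ : ℝ} {M : Set (E × E)} {m : E × E} (hM : IsStrMono σ M)
    (hm : ∀ p ∈ M, σ * ‖m.1 - p.1‖ ^ 2 ≤ ⟪m.2 - p.2, m.1 - p.1⟫) : IsStrMono σ (insert m M) := by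
  rintro p (rfl | hp) q (rfl | hq)
  · simp
  · exact hm q hq
  · rw [norm_sub_rev, ← inner_neg_neg, neg_sub, neg_sub]
    exact hm p hp
  · exact hM p hp q hq

lemma mul_norm_sub_sq_le_inner_iff {σ : ℝ} (p q : E × E) :
    σ * ‖p.1 - q.1‖ ^ 2 ≤ ⟪p.2 - q.2, p.1 - q.1⟫ ↔
      ‖(p.2 - (σ + 1) • p.1) - (q.2 - (σ + 1) • q.1)‖ ≤
        ‖(p.2 + (1 - σ) • p.1) - (q.2 + (1 - σ) • q.1)‖ := by
  have hinner : ⟪(p.2 - q.2) - σ • (p.1 - q.1), p.1 - q.1⟫ =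
      ⟪p.2 - q.2, p.1 - q.1⟫ - σ * ‖p.1 - q.1‖ ^ 2 := by
    rw [inner_sub_left, real_inner_smul_left, real_inner_self_eq_norm_sq]
  rw [← sub_nonneg, ← hinner, ← norm_sub_le_norm_add_iff_inner_nonneg]
  congr! 2 <;> module

/- The Cayley transform `(x, v) ↦ (v + (1 - σ) x, v - (σ + 1) x)` turns a `σ`-strongly monotone set
into the graph of a nonexpansive map, and adding a point over `y` to it is extending that map to one
more point, which is Kirszbraun's theorem. -/
lemma IsStrMono.exists_insert {σ : ℝ} {M : Set (X × X)} (hM : IsStrMono σ M) (y : X) :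
    ∃ x, IsStrMono σ (insert (x, y + (σ - 1) • x) M) := by
  obtain ⟨c, hc⟩ : ∃ c, ∀ m : M, ‖c - (m.1.2 - (σ + 1) • m.1.1)‖ ≤
      ‖m.1.2 + (1 - σ) • m.1.1 - y‖ := by
    refine exists_forall_norm_sub_le_of_forall_finset fun J => ?_
    rcases J.eq_empty_or_nonempty with rfl | hJ
    · exact ⟨0, by simp⟩
    have := hJ.to_subtype
    obtain ⟨c, hc⟩ := exists_forall_norm_sub_le_of_norm_sub_le_norm_sub
      (n := fun m : J => m.1.1.2 - (σ + 1) • m.1.1.1)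
      (s := fun m : J => m.1.1.2 + (1 - σ) • m.1.1.1 - y) fun i j => by
        rw [sub_sub_sub_cancel_right]
        exact (mul_norm_sub_sq_le_inner_iff _ _).1 (hM _ i.1.2 _ j.1.2)
    exact ⟨c, fun m hm => hc ⟨m, hm⟩⟩
  refine ⟨(1 / 2 : ℝ) • (y - c), hM.insert_of_forall fun m hm => ?_⟩
  rw [mul_norm_sub_sq_le_inner_iff]
  convert hc ⟨m, hm⟩ using 1
  · congr 1; module
  · rw [norm_sub_rev]; congr 1; module

lemma StrMaxMono.exists_mem {σ : ℝ} {G : X → Set X} (hG : StrMaxMono σ G) (y : X) :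
    ∃ x, y + (σ - 1) • x ∈ G x := by
  have hG_mono : IsStrMono σ (gph G) := hG.1
  obtain ⟨x, hx⟩ := hG_mono.exists_insert y
  let S : X → Set X := fun a => {b | (a, b) ∈ insert (x, y + (σ - 1) • x) (gph G)}
  have hS : gph S = gph G := hG.2 S hx (subset_insert _ _)
  exact ⟨x, hS.subset (mem_insert (x, y + (σ - 1) • x) (gph G))⟩

end Minty

section Coderivative

variable {E : Type*} [NormedAddCommGroup E] [InnerProductSpace ℝ E]

/-- The lower bound `⟪z, w⟫ ≥ σ ‖w‖ ^ 2` on the regular coderivative at `p` of the set-valued map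
with graph `Ω`. -/
def CoderivLowerBound (σ : ℝ) (Ω : Set (E × E)) (p : E × E) : Prop :=
  ∀ w z : E, (z, -w) ∈ rnc Ω p → σ * ‖w‖ ^ 2 ≤ ⟪z, w⟫

lemma coderivLowerBound_congr {σ : ℝ} {Ω Ω' : Set (E × E)} {p : E × E} (h : Ω =ᶠ[𝓝 p] Ω') :
    CoderivLowerBound σ Ω p ↔ CoderivLowerBound σ Ω' p := by
  simp only [CoderivLowerBound, rnc, nhdsWithin_eq_iff_eventuallyEq.2 h]

lemma mul_norm_sub_mul_le_two_mul_inner_sub {z w a b : E} {t : ℝ} (ht : 0 ≤ t)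
    (hab : 0 ≤ ⟪a, b⟫) (hsum : a + b = t • (z - w)) :
    t * ‖z - w‖ * (‖z - w‖ - ‖z + w‖) ≤ 2 * (⟪z, a⟫ - ⟪w, b⟫) := by
  have hdiff : ‖a - b‖ ≤ t * ‖z - w‖ := by
    rw [← norm_smul_of_nonneg ht, ← hsum]
    exact (norm_sub_le_norm_add_iff_inner_nonneg a b).2 hab
  calc t * ‖z - w‖ * (‖z - w‖ - ‖z + w‖)
      = ⟪z - w, a + b⟫ - ‖z + w‖ * (t * ‖z - w‖) := by
        rw [hsum, real_inner_smul_right, real_inner_self_eq_norm_sq]; ring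
    _ ≤ ⟪z - w, a + b⟫ - ‖z + w‖ * ‖a - b‖ := by gcongr
    _ ≤ ⟪z - w, a + b⟫ + ⟪z + w, a - b⟫ := by
        linarith [neg_le_of_abs_le (abs_real_inner_le_norm (z + w) (a - b))]
    _ = 2 * (⟪z, a⟫ - ⟪w, b⟫) := by
        simp only [inner_sub_left, inner_add_left, inner_add_right, inner_sub_right]; ring

lemma StrMaxMono.exists_add_mem {σ : ℝ} {G : X → Set X} (hG : StrMaxMono σ G) {p : X × X}
    (hp : p ∈ gph G) (d : X) :
    ∃ a b : X, a + b = d ∧ 0 ≤ ⟪a, b⟫ ∧ p + (a, b + σ • a) ∈ gph G := by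
  obtain ⟨x, hx⟩ := hG.exists_mem (p.2 + (1 - σ) • p.1 + d)
  have hmem : p + (x - p.1, d - (x - p.1) + σ • (x - p.1)) ∈ gph G := by
    convert show (x, p.2 + (1 - σ) • p.1 + d + (σ - 1) • x) ∈ gph G from hx using 1
    ext <;> simp only [Prod.fst_add, Prod.snd_add]
    · abel
    · module
  refine ⟨x - p.1, d - (x - p.1), by abel, ?_, hmem⟩
  have hmono := hG.1 _ hmem p hp
  simp only [Prod.fst_add, Prod.snd_add, add_sub_cancel_left] at hmono
  rw [inner_add_left, real_inner_smul_left, real_inner_self_eq_norm_sq] at hmono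
  rw [real_inner_comm]
  linarith

lemma norm_add_norm_add_smul_le {σ : ℝ} {a b d : E} (hab : 0 ≤ ⟪a, b⟫) (hsum : a + b = d) :
    ‖a‖ + ‖b + σ • a‖ ≤ (2 + |σ|) * ‖d‖ := by
  have hd : ‖d‖ ^ 2 = ‖a‖ ^ 2 + 2 * ⟪a, b⟫ + ‖b‖ ^ 2 := by rw [← hsum, norm_add_sq_real]
  have ha : ‖a‖ ≤ ‖d‖ := by
    rw [← sq_le_sq₀ (norm_nonneg _) (norm_nonneg _)]; linarith [sq_nonneg ‖b‖]
  have hb : ‖b‖ ≤ ‖d‖ := by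
    rw [← sq_le_sq₀ (norm_nonneg _) (norm_nonneg _)]; linarith [sq_nonneg ‖a‖]
  calc ‖a‖ + ‖b + σ • a‖ ≤ ‖a‖ + (‖b‖ + |σ| * ‖a‖) := by
        gcongr
        exact (norm_add_le _ _).trans_eq (by rw [norm_smul, Real.norm_eq_abs])
    _ ≤ ‖d‖ + (‖d‖ + |σ| * ‖d‖) := by gcongr
    _ = (2 + |σ|) * ‖d‖ := by ring

lemma StrMaxMono.exists_path {σ : ℝ} {G : X → Set X} (hG : StrMaxMono σ G) {p : X × X}
    (hp : p ∈ gph G) (d : X) :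
    ∃ a b : ℝ → X, (∀ t, a t + b t = t • d) ∧ (∀ t, 0 ≤ ⟪a t, b t⟫) ∧
      Tendsto (fun t => p + (a t, b t + σ • a t)) (𝓝 0) (𝓝[gph G] p) := by
  choose a b hsum hab hmem using fun t : ℝ => hG.exists_add_mem hp (t • d)
  refine ⟨a, b, hsum, hab, tendsto_nhdsWithin_iff.2 ⟨?_, .of_forall hmem⟩⟩
  have hbound : Continuous fun t : ℝ => (2 + |σ|) * ‖t • d‖ := by fun_prop
  refine tendsto_iff_norm_sub_tendsto_zero.2 <| squeeze_zero (fun _ => norm_nonneg _) (fun t => ?_)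
    (hbound.tendsto' 0 0 (by simp))
  rw [add_sub_cancel_left]
  exact (max_le_add_of_nonneg (norm_nonneg _) (norm_nonneg _)).trans
    (norm_add_norm_add_smul_le (hab t) (hsum t))

/- The graph points reached from `p` by moving the argument of the resolvent in the direction
`z - σ • w - w` are the ones that detect a violation of the bound. -/
lemma StrMaxMono.coderivLowerBound {σ : ℝ} {G : X → Set X} (hG : StrMaxMono σ G) {p : X × X}
    (hp : p ∈ gph G) : CoderivLowerBound σ (gph G) p := by
  intro w z hz
  set z' := z - σ • w with hz'
  suffices hnorm : ‖z' - w‖ ≤ ‖z' + w‖ by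
    rw [norm_sub_le_norm_add_iff_inner_nonneg, hz', inner_sub_left, real_inner_smul_left,
      real_inner_self_eq_norm_sq] at hnorm
    linarith
  rcases eq_or_ne (z' - w) 0 with hd | hd
  · rw [hd, norm_zero]; exact norm_nonneg _
  obtain ⟨a, b, hsum, hab, hlim⟩ := hG.exists_path hp (z' - w)
  refine le_of_forall_pos_le_add fun ε hε => ?_
  obtain ⟨t, hnormal, ht : 0 < t⟩ :=
    (((hlim.mono_left nhdsWithin_le_nhds).eventually
      (hz (ε / (2 * (2 + |σ|))) (by positivity))).and (self_mem_nhdsWithin (s := Ioi 0))).exists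
  simp only [Prod.fst_add, Prod.snd_add, add_sub_cancel_left] at hnormal
  have hinner : ⟪z, a t⟫ + ⟪-w, b t + σ • a t⟫ = ⟪z', a t⟫ - ⟪w, b t⟫ := by
    rw [hz', inner_neg_left, inner_add_right, inner_sub_left, real_inner_smul_left,
      real_inner_smul_right]
    ring
  have hupper : 2 * (⟪z', a t⟫ - ⟪w, b t⟫) ≤ t * ‖z' - w‖ * ε :=
    calc 2 * (⟪z', a t⟫ - ⟪w, b t⟫)
        ≤ 2 * (ε / (2 * (2 + |σ|)) * (‖a t‖ + ‖b t + σ • a t‖)) := by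
          rw [← hinner]; gcongr
      _ ≤ 2 * (ε / (2 * (2 + |σ|)) * ((2 + |σ|) * ‖t • (z' - w)‖)) := by
          gcongr; exact norm_add_norm_add_smul_le (hab t) (hsum t)
      _ = t * ‖z' - w‖ * ε := by rw [norm_smul_of_nonneg ht.le]; field_simp
  have hlower := mul_norm_sub_mul_le_two_mul_inner_sub ht.le (hab t) (hsum t)
  linarith [le_of_mul_le_mul_left (hlower.trans hupper) (mul_pos ht (norm_pos_iff.2 hd))]

end Coderivative

section VariationalPrinciple

/-- Some sublevel set of `f` on `S`, taken strictly above the value of `f` at one of the points of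
`S`, lies within distance `r` of that point. -/
def HasSmallSublevel {α : Type*} [Dist α] (f : α → ℝ) (S : Set α) (r : ℝ) : Prop :=
  ∃ δ > 0, ∃ s₀ ∈ S, ∀ s ∈ S, f s ≤ f s₀ + δ → dist s s₀ ≤ r

lemma exists_isMinOn_of_hasSmallSublevel {α : Type*} [MetricSpace α] [CompleteSpace α] {f : α → ℝ}
    {S : Set α} (hS : IsClosed S) (hf : LowerSemicontinuousOn f S) (hbdd : BddBelow (f '' S))
    (h : ∀ r > 0, HasSmallSublevel f S r) : ∃ s ∈ S, IsMinOn f S s := by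
  have hne : S.Nonempty := by obtain ⟨-, -, s, hs, -⟩ := h 1 one_pos; exact ⟨s, hs⟩
  have hInf_le (s : α) (hs : s ∈ S) : sInf (f '' S) ≤ f s := csInf_le hbdd (mem_image_of_mem f hs)
  obtain ⟨u, -, hu_lim, hu_mem⟩ := exists_seq_tendsto_sInf (hne.image f) hbdd
  choose s hs hsu using hu_mem
  obtain rfl : (fun k => f (s k)) = u := funext hsu
  have hcauchy : CauchySeq s := by
    refine Metric.cauchySeq_iff'.2 fun ε hε => ?_
    obtain ⟨δ, hδ, s₀, hs₀, hsmall⟩ := h (ε / 3) (by positivity)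
    obtain ⟨N, hN⟩ := eventually_atTop.1 (hu_lim.eventually_lt_const (lt_add_of_pos_right _ hδ))
    have hdist (k : ℕ) (hk : N ≤ k) : dist (s k) s₀ ≤ ε / 3 :=
      hsmall _ (hs k) (by linarith [hN k hk, hInf_le s₀ hs₀])
    refine ⟨N, fun k hk => ?_⟩
    linarith [dist_triangle_right (s k) (s N) s₀, hdist k hk, hdist N le_rfl]
  obtain ⟨x, hx⟩ := cauchySeq_tendsto_of_complete hcauchy
  have hxS : x ∈ S := hS.mem_of_tendsto hx (.of_forall hs)
  refine ⟨x, hxS, fun s' hs' => le_trans (le_of_forall_lt_imp_le_of_dense fun c hc => ?_)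
    (hInf_le s' hs')⟩
  exact ge_of_tendsto hu_lim (((tendsto_nhdsWithin_iff.2 ⟨hx, .of_forall hs⟩).eventually
    (hf x hxS c hc)).mono fun _ => le_of_lt)

variable {E : Type*} [NormedAddCommGroup E] [InnerProductSpace ℝ E]

/-- The function `g` perturbed by the quadratic function with the parameters `p`, to which the
Baire category theorem applies when `E` is complete. -/
def quadPerturb (g : E → ℝ) (p : ℝ × E) (s : E) : ℝ :=
  g s + p.1 * ‖s‖ ^ 2 + ⟪p.2, s⟫

lemma abs_quadPerturb_sub_le (g : E → ℝ) (p q : ℝ × E) {s : E} {M : ℝ} (hs : ‖s‖ ≤ M) :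
    |quadPerturb g p s - quadPerturb g q s| ≤ (1 + M) ^ 2 * dist p q := by
  have hM : 0 ≤ M := (norm_nonneg s).trans hs
  calc |quadPerturb g p s - quadPerturb g q s|
      = |(p - q).1 * ‖s‖ ^ 2 + ⟪(p - q).2, s⟫| := by
        simp only [quadPerturb, Prod.fst_sub, Prod.snd_sub, inner_sub_left]; ring_nf
    _ ≤ ‖(p - q).1‖ * ‖s‖ ^ 2 + ‖(p - q).2‖ * ‖s‖ := by
        refine (abs_add_le _ _).trans (add_le_add ?_ (abs_real_inner_le_norm _ _))
        rw [abs_mul, abs_of_nonneg (sq_nonneg ‖s‖), Real.norm_eq_abs]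
    _ ≤ ‖p - q‖ * M ^ 2 + ‖p - q‖ * M := by
        gcongr
        exacts [norm_fst_le _, norm_snd_le _]
    _ ≤ (1 + M) ^ 2 * dist p q := by
        rw [dist_eq_norm]; nlinarith [mul_nonneg (norm_nonneg (p - q)) hM, norm_nonneg (p - q)]

lemma quadPerturb_add_sub_smul (g : E → ℝ) (p : ℝ × E) (τ : ℝ) (s₀ s : E) :
    quadPerturb g (p.1 + τ, p.2 - (2 * τ) • s₀) s =
      quadPerturb g p s + τ * ‖s - s₀‖ ^ 2 - τ * ‖s₀‖ ^ 2 := by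
  simp only [quadPerturb]
  rw [norm_sub_sq_real, inner_sub_left, real_inner_smul_left, real_inner_comm s s₀]
  ring

lemma quadPerturb_eq_quadPerturb_add (g : E → ℝ) (p : ℝ × E) (s s' : E) :
    quadPerturb g p s' = quadPerturb g p s + (g s' - g s) +
      ⟪p.2 + (2 * p.1) • s, s' - s⟫ + p.1 * ‖s' - s‖ ^ 2 := by
  simp only [quadPerturb]
  rw [norm_sub_sq_real, inner_add_left, real_inner_smul_left, inner_sub_right, inner_sub_right,
    real_inner_self_eq_norm_sq, real_inner_comm s s']
  ring

lemma isOpen_setOf_hasSmallSublevel_quadPerturb (g : E → ℝ) {S : Set E} {M : ℝ}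
    (hM : ∀ s ∈ S, ‖s‖ ≤ M) (r : ℝ) : IsOpen {p | HasSmallSublevel (quadPerturb g p) S r} := by
  refine Metric.isOpen_iff.2 ?_
  rintro p ⟨δ, hδ, s₀, hs₀, hsmall⟩
  have hM1 : 0 < 1 + M := by linarith [norm_nonneg s₀, hM s₀ hs₀]
  refine ⟨δ / (4 * (1 + M) ^ 2), by positivity, fun q hq => ⟨δ / 2, by positivity, s₀, hs₀, ?_⟩⟩
  intro s hs hle
  have hclose (x : E) (hx : x ∈ S) : |quadPerturb g q x - quadPerturb g p x| ≤ δ / 4 :=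
    calc |quadPerturb g q x - quadPerturb g p x| ≤ (1 + M) ^ 2 * dist q p :=
          abs_quadPerturb_sub_le g q p (hM x hx)
      _ ≤ (1 + M) ^ 2 * (δ / (4 * (1 + M) ^ 2)) := by gcongr; exact (Metric.mem_ball.1 hq).le
      _ = δ / 4 := by field_simp
  exact hsmall s hs (by linarith [(abs_le.1 (hclose s hs)).1, (abs_le.1 (hclose s₀ hs₀)).2])

lemma bddBelow_image_quadPerturb {g : E → ℝ} {S : Set E} {M : ℝ} (hM : ∀ s ∈ S, ‖s‖ ≤ M)
    (hg : BddBelow (g '' S)) (p : ℝ × E) : BddBelow (quadPerturb g p '' S) := by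
  obtain ⟨m, hm⟩ := hg
  refine ⟨m - (1 + M) ^ 2 * dist p 0, ?_⟩
  rintro _ ⟨s, hs, rfl⟩
  have hzero : quadPerturb g 0 s = g s := by simp [quadPerturb]
  linarith [hm (mem_image_of_mem g hs), neg_le_of_abs_le (abs_quadPerturb_sub_le g p 0 (hM s hs))]

lemma dense_setOf_hasSmallSublevel_quadPerturb {g : E → ℝ} {S : Set E} (hne : S.Nonempty) {M : ℝ}
    (hM : ∀ s ∈ S, ‖s‖ ≤ M) (hg : BddBelow (g '' S)) {r : ℝ} (hr : 0 < r) :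
    Dense {p | HasSmallSublevel (quadPerturb g p) S r} := by
  have hM0 : 0 ≤ M := let ⟨s, hs⟩ := hne; (norm_nonneg s).trans (hM s hs)
  refine Metric.dense_iff.2 fun p η hη => ?_
  set τ := η / (2 * (1 + 2 * M)) with hτ
  have hτ_pos : 0 < τ := by positivity
  have hτM : τ * (1 + 2 * M) = η / 2 := by rw [hτ]; field_simp
  obtain ⟨_, ⟨s₀, hs₀, rfl⟩, hlt⟩ := exists_lt_of_csInf_lt (hne.image (quadPerturb g p))
    (lt_add_of_pos_right _ (by positivity : 0 < τ * r ^ 2 / 2))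
  refine ⟨(p.1 + τ, p.2 - (2 * τ) • s₀), ?_, τ * r ^ 2 / 2, by positivity, s₀, hs₀, ?_⟩
  · have hτs₀ : τ * ‖s₀‖ ≤ τ * M := by gcongr; exact hM s₀ hs₀
    rw [Metric.mem_ball, Prod.dist_eq, max_lt_iff, Real.dist_eq, dist_eq_norm]
    simp only [add_sub_cancel_left, sub_sub_cancel_left, norm_neg]
    rw [abs_of_pos hτ_pos, norm_smul_of_nonneg (by positivity)]
    constructor <;> nlinarith [norm_nonneg s₀, mul_nonneg hτ_pos.le hM0]
  · intro s hs hle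
    rw [quadPerturb_add_sub_smul, quadPerturb_add_sub_smul, sub_self, norm_zero] at hle
    have hInf := csInf_le (bddBelow_image_quadPerturb hM hg p) (mem_image_of_mem _ hs)
    have hsq : τ * ‖s - s₀‖ ^ 2 ≤ τ * r ^ 2 := by linarith
    rw [dist_eq_norm]
    exact (sq_le_sq₀ (norm_nonneg _) hr.le).1 (le_of_mul_le_mul_left hsq hτ_pos)

lemma exists_isMinOn_quadPerturb {g : X → ℝ} {S : Set X} (hS : IsClosed S) (hne : S.Nonempty)
    {M : ℝ} (hM : ∀ s ∈ S, ‖s‖ ≤ M) (hg : LowerSemicontinuousOn g S) (hbdd : BddBelow (g '' S))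
    {ε : ℝ} (hε : 0 < ε) : ∃ p : ℝ × X, dist p 0 < ε ∧ ∃ s ∈ S, IsMinOn (quadPerturb g p) S s := by
  have hdense : Dense (⋂ k : ℕ, {p | HasSmallSublevel (quadPerturb g p) S (1 / ((k : ℝ) + 1))}) :=
    dense_iInter_of_isOpen (fun _ => isOpen_setOf_hasSmallSublevel_quadPerturb g hM _)
      fun _ => dense_setOf_hasSmallSublevel_quadPerturb hne hM hbdd (by positivity)
  obtain ⟨p, hpε, hp⟩ := Metric.dense_iff.1 hdense 0 ε hε
  refine ⟨p, hpε, exists_isMinOn_of_hasSmallSublevel hS ?_ (bddBelow_image_quadPerturb hM hbdd p)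
    fun r hr => ?_⟩
  · exact (hg.add (ContinuousOn.lowerSemicontinuousOn (by fun_prop))).add
      (ContinuousOn.lowerSemicontinuousOn (by fun_prop))
  · obtain ⟨k, hk⟩ := exists_nat_one_div_lt hr
    obtain ⟨δ, hδ, s₀, hs₀, hsmall⟩ := mem_iInter.1 hp k
    exact ⟨δ, hδ, s₀, hs₀, fun s hs hle => (hsmall s hs hle).trans hk.le⟩

lemma exists_approx_minimizer_quadratic_support {g : X → ℝ} {S : Set X} (hS : IsClosed S)
    (hne : S.Nonempty) (hS_bdd : Bornology.IsBounded S) (hg : LowerSemicontinuousOn g S)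
    (hbdd : BddBelow (g '' S)) {η : ℝ} (hη : 0 < η) :
    ∃ s ∈ S, ∃ e : X, ‖e‖ ≤ η ∧ (∀ s' ∈ S, g s ≤ g s' + η) ∧
      ∀ s' ∈ S, g s ≤ g s' + ⟪e, s' - s⟫ + η * ‖s' - s‖ ^ 2 := by
  obtain ⟨M, hM⟩ := hS_bdd.exists_norm_le
  have hM0 : 0 ≤ M := let ⟨s, hs⟩ := hne; (norm_nonneg s).trans (hM s hs)
  set ε := η / (2 * (1 + M) ^ 2) with hε
  have hεη : 2 * ((1 + M) ^ 2 * ε) = η := by rw [hε]; field_simp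
  have hε_pos : 0 < ε := by positivity
  obtain ⟨p, hp, s, hs, hmin⟩ := exists_isMinOn_quadPerturb hS hne hM hg hbdd hε_pos
  have hp1 : |p.1| ≤ ε := (norm_fst_le p).trans (by rw [← dist_zero_right]; exact hp.le)
  have hp2 : ‖p.2‖ ≤ ε := (norm_snd_le p).trans (by rw [← dist_zero_right]; exact hp.le)
  refine ⟨s, hs, p.2 + (2 * p.1) • s, ?_, fun s' hs' => ?_, fun s' hs' => ?_⟩
  · calc ‖p.2 + (2 * p.1) • s‖ ≤ ‖p.2‖ + 2 * |p.1| * ‖s‖ := by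
          refine (norm_add_le _ _).trans_eq ?_
          rw [norm_smul, norm_mul, Real.norm_two, Real.norm_eq_abs]
      _ ≤ ε + 2 * ε * M := by gcongr; exact hM s hs
      _ ≤ η := by nlinarith [mul_nonneg hε_pos.le hM0]
  · have hclose (x : X) (hx : x ∈ S) : |quadPerturb g p x - g x| ≤ η / 2 := by
      have hzero : quadPerturb g 0 x = g x := by simp [quadPerturb]
      rw [← hzero]
      refine (abs_quadPerturb_sub_le g p 0 (hM x hx)).trans ?_
      nlinarith [mul_le_mul_of_nonneg_left hp.le (sq_nonneg (1 + M))]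
    have hle : quadPerturb g p s ≤ quadPerturb g p s' := hmin hs'
    linarith [(abs_le.1 (hclose s hs)).1, (abs_le.1 (hclose s' hs')).2]
  · have hle : quadPerturb g p s ≤ quadPerturb g p s' := hmin hs'
    have hη' : p.1 * ‖s' - s‖ ^ 2 ≤ η * ‖s' - s‖ ^ 2 := by
      gcongr
      nlinarith [le_abs_self p.1, mul_nonneg hε_pos.le hM0, mul_nonneg hε_pos.le (sq_nonneg M)]
    rw [quadPerturb_eq_quadPerturb_add g p s s'] at hle
    unfold quadPerturb at hle
    linarith

end VariationalPrinciple

section Proximal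

variable {E : Type*} [NormedAddCommGroup E] [InnerProductSpace ℝ E]

/-- `w` is a proximal normal to `S` at `s`, in the local form with a quadratic bound, in which the
proximal normals detect where a closed set fails to be open. -/
def IsProximalNormal (S : Set E) (s w : E) : Prop :=
  ∃ C : ℝ, ∀ᶠ s' in 𝓝[S] s, ⟪w, s' - s⟫ ≤ C * ‖s' - s‖ ^ 2

/-- `w` is a proximal subgradient of `h` at `y`: up to a quadratic error, `w` supports `h` from
below near `y`. Bounds on these give Lipschitz bounds for `h`. -/
def IsProximalSubgradient (h : E → ℝ) (y w : E) : Prop :=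
  ∃ C : ℝ, ∀ᶠ y' in 𝓝 y, h y + ⟪w, y' - y⟫ - C * ‖y' - y‖ ^ 2 ≤ h y'

lemma isProximalNormal_of_eventually_norm_sub_sq_le {S : Set E} {s y e : E} {η : ℝ}
    (h : ∀ᶠ s' in 𝓝[S] s, ‖s - y‖ ^ 2 ≤ ‖s' - y‖ ^ 2 + ⟪e, s' - s⟫ + η * ‖s' - s‖ ^ 2) :
    IsProximalNormal S s (-((2 : ℝ) • (s - y) + e)) := by
  refine ⟨1 + η, h.mono fun s' hs' => ?_⟩
  have hexpand : ‖s' - y‖ ^ 2 = ‖s - y‖ ^ 2 + 2 * ⟪s - y, s' - s⟫ + ‖s' - s‖ ^ 2 := by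
    rw [← norm_add_sq_real, add_comm (s - y), sub_add_sub_cancel]
  rw [inner_neg_left, inner_add_left, real_inner_smul_left]
  linarith

/- A point of `U` outside `S` has near-projections onto `S`, and the displacement to them is almost
a proximal normal. -/
lemma isOpen_inter_of_forall_isProximalNormal_eq_zero {S U : Set X} (hS : IsClosed S)
    (hU : IsOpen U) (h : ∀ s ∈ S ∩ U, ∀ w, IsProximalNormal S s w → w = 0) : IsOpen (S ∩ U) := by
  refine Metric.isOpen_iff.2 fun y₁ hy₁ => ?_
  obtain ⟨R, hR, hRU⟩ := Metric.nhds_basis_closedBall.mem_iff.1 (hU.mem_nhds hy₁.2)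
  refine ⟨R / 3, by positivity, fun y₀ hy₀ => ⟨?_, ?_⟩⟩
  swap
  · exact hRU (Metric.ball_subset_closedBall (Metric.ball_subset_ball (by linarith) hy₀))
  rw [mem_ball_iff_norm'] at hy₀
  have hy₁_mem : y₁ ∈ S ∩ Metric.closedBall y₁ R := ⟨hy₁.1, Metric.mem_closedBall_self hR.le⟩
  refine hS.closure_subset (Metric.mem_closure_iff.2 fun ε hε => ?_)
  obtain ⟨s, ⟨hsS, -⟩, e, he, hnear, hsupp⟩ := exists_approx_minimizer_quadratic_support
    (g := fun s => ‖s - y₀‖ ^ 2) (hS.inter Metric.isClosed_closedBall) ⟨y₁, hy₁_mem⟩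
    (Metric.isBounded_closedBall.subset inter_subset_right)
    (ContinuousOn.lowerSemicontinuousOn (by fun_prop))
    ⟨0, by rintro _ ⟨s, -, rfl⟩; positivity⟩ (by positivity : 0 < min ε (R ^ 2 / 9))
  have hs_y₀ : ‖s - y₀‖ < 2 * R / 3 := by
    rw [← sq_lt_sq₀ (norm_nonneg _) (by positivity)]
    nlinarith [norm_nonneg (y₁ - y₀), hnear y₁ hy₁_mem, min_le_right ε (R ^ 2 / 9)]
  have hs_y₁ : s ∈ Metric.ball y₁ R := by
    rw [mem_ball_iff_norm]
    linarith [norm_sub_le_norm_sub_add_norm_sub s y₀ y₁, norm_sub_rev y₀ y₁]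
  have hzero := h s ⟨hsS, hRU (Metric.ball_subset_closedBall hs_y₁)⟩ _ <|
    isProximalNormal_of_eventually_norm_sub_sq_le <| by
      filter_upwards [self_mem_nhdsWithin, nhdsWithin_le_nhds
        (Metric.closedBall_mem_nhds_of_mem hs_y₁)] with s' hs'S hs' using hsupp s' ⟨hs'S, hs'⟩
  have hnorm : 2 * ‖s - y₀‖ = ‖e‖ := by
    rw [neg_eq_zero, add_eq_zero_iff_eq_neg] at hzero
    rw [← norm_smul_of_nonneg zero_le_two, hzero, norm_neg]
  refine ⟨s, hsS, ?_⟩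
  rw [dist_comm, dist_eq_norm]
  linarith [min_le_left ε (R ^ 2 / 9), norm_nonneg (s - y₀)]

lemma norm_add_le_norm_add_inner_div {x : E} (hx : x ≠ 0) (y : E) :
    ‖x + y‖ ≤ ‖x‖ + ⟪x, y⟫ / ‖x‖ + ‖y‖ ^ 2 / (2 * ‖x‖) := by
  have : 0 < ‖x‖ := norm_pos_iff.2 hx
  have hsq := norm_add_sq_real x y
  have heq : ‖x‖ + ⟪x, y⟫ / ‖x‖ + ‖y‖ ^ 2 / (2 * ‖x‖) =
      (‖x‖ ^ 2 + ‖x + y‖ ^ 2) / (2 * ‖x‖) := by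
    rw [hsq]; field_simp; ring
  rw [heq, le_div_iff₀ (by positivity)]
  linarith [two_mul_le_add_sq ‖x‖ ‖x + y‖]

lemma isProximalSubgradient_of_isLocalMin_penalized {h : E → ℝ} {a s e : E} {α C η : ℝ}
    (hα : 0 ≤ α) (hs : s ≠ a)
    (hmin : ∀ᶠ y in 𝓝 s, h s + α * ‖s - a‖ + C * ‖s - a‖ ^ 2 ≤
      h y + α * ‖y - a‖ + C * ‖y - a‖ ^ 2 + ⟪e, y - s⟫ + η * ‖y - s‖ ^ 2) :
    IsProximalSubgradient h s (-((α / ‖s - a‖ + 2 * C) • (s - a) + e)) := by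
  refine ⟨α / (2 * ‖s - a‖) + C + η, hmin.mono fun y hy => ?_⟩
  have hsplit : y - a = (s - a) + (y - s) := by abel
  have hnorm : α * ‖y - a‖ ≤
      α * (‖s - a‖ + ⟪s - a, y - s⟫ / ‖s - a‖ + ‖y - s‖ ^ 2 / (2 * ‖s - a‖)) := by
    rw [hsplit]
    gcongr
    exact norm_add_le_norm_add_inner_div (sub_ne_zero.2 hs) _
  have hsq : ‖y - a‖ ^ 2 = ‖s - a‖ ^ 2 + 2 * ⟪s - a, y - s⟫ + ‖y - s‖ ^ 2 := by
    rw [hsplit, norm_add_sq_real]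
  rw [inner_neg_left, inner_add_left, real_inner_smul_left]
  rw [hsq] at hy
  linear_combination hy + hnorm

/- `C` is so large that the near-minimizers of `y ↦ h y + α * ‖y - a‖ + C * ‖y - a‖ ^ 2` stay away
from the boundary of the ball, and `b` keeps them away from `a`. -/
lemma exists_isProximalSubgradient_of_penalized_lt {h : X → ℝ} {a b : X} {α C R η : ℝ}
    (hα : 0 ≤ α) (hC : 0 ≤ C) (hh : LowerSemicontinuousOn h (Metric.closedBall a R))
    (hlow : ∀ y ∈ Metric.closedBall a R, h a - C * R ^ 2 < h y) (hb : b ∈ Metric.closedBall a R)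
    (hlt : h b + α * ‖b - a‖ + C * ‖b - a‖ ^ 2 < h a) (hη : 0 < η) :
    ∃ s ∈ Metric.closedBall a R, ∃ w, IsProximalSubgradient h s w ∧ α ≤ ‖w‖ + η := by
  set gap := h a - (h b + α * ‖b - a‖ + C * ‖b - a‖ ^ 2) with hgap
  obtain ⟨s, hs, e, he, happrox, hsupp⟩ := exists_approx_minimizer_quadratic_support
    (g := fun y => h y + α * ‖y - a‖ + C * ‖y - a‖ ^ 2) Metric.isClosed_closedBall
    ⟨b, hb⟩ Metric.isBounded_closedBall
    ((hh.add (ContinuousOn.lowerSemicontinuousOn (by fun_prop))).add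
      (ContinuousOn.lowerSemicontinuousOn (by fun_prop)))
    ⟨h a - C * R ^ 2, by
      rintro _ ⟨y, hy, rfl⟩
      have : 0 ≤ α * ‖y - a‖ + C * ‖y - a‖ ^ 2 := by positivity
      linarith [hlow y hy]⟩ (lt_min hη (by linarith : 0 < gap / 2))
  have hs_lt : h s + α * ‖s - a‖ + C * ‖s - a‖ ^ 2 < h a := by
    linarith [happrox b hb, min_le_right η (gap / 2)]
  have hs_ne : s ≠ a := by rintro rfl; simp at hs_lt
  have hs_pos : 0 < ‖s - a‖ := norm_pos_iff.2 (sub_ne_zero.2 hs_ne)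
  have hs_ball : s ∈ Metric.ball a R := by
    rw [mem_ball_iff_norm]
    by_contra! hRs
    have hR : 0 ≤ R := Metric.nonempty_closedBall.1 ⟨b, hb⟩
    have hCR : C * R ^ 2 ≤ C * ‖s - a‖ ^ 2 := by gcongr
    linarith [hlow s hs, mul_nonneg hα (norm_nonneg (s - a))]
  refine ⟨s, hs, _, isProximalSubgradient_of_isLocalMin_penalized hα hs_ne
    (Filter.mem_of_superset (Metric.closedBall_mem_nhds_of_mem hs_ball) hsupp), ?_⟩
  have hnorm : ‖(α / ‖s - a‖ + 2 * C) • (s - a)‖ = α + 2 * C * ‖s - a‖ := by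
    rw [norm_smul_of_nonneg (by positivity), add_mul, div_mul_cancel₀ _ hs_pos.ne']
  have hC_nonneg : 0 ≤ 2 * C * ‖s - a‖ := by positivity
  rw [norm_neg]
  linarith [norm_sub_le_norm_add ((α / ‖s - a‖ + 2 * C) • (s - a)) e, min_le_left η (gap / 2)]

lemma exists_eventually_le_add_mul_norm_add_sq {h : X → ℝ} {V : Set X} (hV : IsOpen V)
    (hh : LowerSemicontinuousOn h V) {K K' : ℝ} (hK : 0 ≤ K)
    (hsub : ∀ y ∈ V, ∀ w, IsProximalSubgradient h y w → ‖w‖ ≤ K) (hK' : K < K') {a : X}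
    (ha : a ∈ V) : ∃ C, ∀ᶠ b in 𝓝 a, h a ≤ h b + K' * ‖b - a‖ + C * ‖b - a‖ ^ 2 := by
  have hnear : ∀ᶠ y in 𝓝 a, y ∈ V ∧ h a - 1 < h y :=
    (hV.eventually_mem ha).and (hV.nhdsWithin_eq ha ▸ hh a ha _ (sub_one_lt _))
  obtain ⟨R, hR, hball⟩ := Metric.nhds_basis_closedBall.mem_iff.1 hnear
  refine ⟨1 / R ^ 2, ?_⟩
  filter_upwards [Metric.closedBall_mem_nhds a hR] with b hb
  by_contra! hlt
  obtain ⟨s, hs, w, hw, hle⟩ := exists_isProximalSubgradient_of_penalized_lt (hK.trans hK'.le)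
    (by positivity) (hh.mono fun y hy => (hball hy).1)
    (fun y hy => by rw [one_div_mul_cancel (by positivity)]; exact (hball hy).2) hb hlt
    (half_pos (sub_pos.2 hK'))
  linarith [hsub s (hball hs).1 w hw]

lemma eventually_le_add_mul_norm {h : X → ℝ} {V : Set X} (hV : IsOpen V)
    (hh : LowerSemicontinuousOn h V) {K K' : ℝ} (hK : 0 ≤ K)
    (hsub : ∀ y ∈ V, ∀ w, IsProximalSubgradient h y w → ‖w‖ ≤ K) (hK' : K < K') {a : X}
    (ha : a ∈ V) : ∀ᶠ b in 𝓝 a, h a ≤ h b + K' * ‖b - a‖ := by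
  obtain ⟨K₁, hKK₁, hK₁K'⟩ := exists_between hK'
  obtain ⟨C, hC⟩ := exists_eventually_le_add_mul_norm_add_sq hV hh hK hsub hKK₁ ha
  have hsmall : ∀ᶠ b in 𝓝 a, C * ‖b - a‖ < K' - K₁ := by
    have hcont : Continuous fun b => C * ‖b - a‖ := by fun_prop
    exact (hcont.tendsto' a 0 (by simp)).eventually_lt_const (sub_pos.2 hK₁K')
  filter_upwards [hC, hsmall] with b hb hbC
  nlinarith [norm_nonneg (b - a)]

lemma sub_le_mul_norm_of_forall_isProximalSubgradient {h : X → ℝ} {V : Set X} (hV : IsOpen V)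
    (hconv : Convex ℝ V) (hh : ContinuousOn h V) {K : ℝ} (hK : 0 ≤ K)
    (hsub : ∀ y ∈ V, ∀ w, IsProximalSubgradient h y w → ‖w‖ ≤ K) {a b : X} (ha : a ∈ V)
    (hb : b ∈ V) : h a - h b ≤ K * ‖b - a‖ := by
  rcases eq_or_ne a b with rfl | hab
  · simp
  have hD : 0 < ‖b - a‖ := norm_pos_iff.2 (sub_ne_zero.2 hab.symm)
  have hline : Continuous fun t : ℝ => a + t • (b - a) := by fun_prop
  have hmem (t : ℝ) (ht : t ∈ Icc (0 : ℝ) 1) : a + t • (b - a) ∈ V :=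
    hconv.add_smul_sub_mem ha hb ht
  have hfence := image_le_of_liminf_slope_right_le_deriv_boundary
    (f := fun t : ℝ => -h (a + t • (b - a))) (B := fun t => -h a + t * (K * ‖b - a‖))
    (B' := fun _ => K * ‖b - a‖) (hh.comp hline.continuousOn hmem).neg (by simp)
    (by fun_prop)
    (fun t _ => ((hasDerivAt_mul_const (K * ‖b - a‖)).const_add (-h a)).hasDerivWithinAt)
    (fun t ht r hr => ?_) (right_mem_Icc.2 zero_le_one)
  · simp only [one_smul, add_sub_cancel, one_mul] at hfence
    linarith
  · obtain ⟨K', hKK', hK'r⟩ := exists_between ((lt_div_iff₀ hD).2 hr)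
    have hlocal := eventually_le_add_mul_norm hV hh.lowerSemicontinuousOn hK hsub hKK'
      (hmem t ⟨ht.1, ht.2.le⟩)
    refine Eventually.frequently ?_
    filter_upwards [self_mem_nhdsWithin,
      nhdsWithin_le_nhds ((hline.tendsto t).eventually hlocal)] with t' (ht' : t < t') hle
    have hstep : a + t' • (b - a) - (a + t • (b - a)) = (t' - t) • (b - a) := by module
    rw [hstep, norm_smul_of_nonneg (sub_pos.2 ht').le] at hle
    rw [slope_def_field, div_lt_iff₀ (sub_pos.2 ht')]
    rw [lt_div_iff₀ hD] at hK'r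
    nlinarith [sub_pos.2 ht']

lemma mul_norm_sq_le_inner_iff {lam : ℝ} (hlam : 0 < lam) (q w : E) :
    lam * ‖w‖ ^ 2 ≤ ⟪q, w⟫ ↔ ‖w - (1 / (2 * lam)) • q‖ ≤ 1 / (2 * lam) * ‖q‖ := by
  have hexpand : ‖w - (1 / (2 * lam)) • q‖ ^ 2 =
      (1 / (2 * lam) * ‖q‖) ^ 2 + (lam * ‖w‖ ^ 2 - ⟪q, w⟫) / lam := by
    rw [norm_sub_sq_real, real_inner_smul_right, norm_smul_of_nonneg (by positivity),
      real_inner_comm]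
    field_simp
    ring
  rw [← sq_le_sq₀ (norm_nonneg _) (by positivity), hexpand, add_le_iff_nonpos_right,
    div_le_iff₀ hlam, zero_mul, sub_nonpos]

/- After subtracting `(2 * lam)⁻¹ • id`, `lam`-cocoercivity becomes Lipschitz continuity with
constant `(2 * lam)⁻¹`, which the mean value inequality detects on proximal subgradients. -/
lemma mul_norm_sub_sq_le_inner_of_forall_isProximalSubgradient {f : X → X} {V : Set X}
    (hV : IsOpen V) (hconv : Convex ℝ V) (hf : ContinuousOn f V) {lam : ℝ} (hlam : 0 < lam)
    (hsub : ∀ y ∈ V, ∀ q w, IsProximalSubgradient (fun y => ⟪q, f y⟫) y w →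
      lam * ‖w‖ ^ 2 ≤ ⟪q, w⟫) {a b : X} (ha : a ∈ V) (hb : b ∈ V) :
    lam * ‖f a - f b‖ ^ 2 ≤ ⟪a - b, f a - f b⟫ := by
  set c := 1 / (2 * lam) with hc
  have hsub' (q y : X) (hy : y ∈ V) (w : X)
      (hw : IsProximalSubgradient (fun y => ⟪q, f y - c • y⟫) y w) : ‖w‖ ≤ c * ‖q‖ := by
    have hshift : IsProximalSubgradient (fun y => ⟪q, f y⟫) y (w + c • q) := by
      obtain ⟨C, hC⟩ := hw
      refine ⟨C, hC.mono fun y' hy' => ?_⟩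
      simp only [inner_sub_right, real_inner_smul_right] at hy'
      simp only [inner_add_left, real_inner_smul_left, inner_sub_right]
      linarith
    simpa [← hc] using (mul_norm_sq_le_inner_iff hlam q _).1 (hsub y hy q _ hshift)
  set q := (f a - f b) - c • (a - b) with hq
  have hmean : ⟪q, f a - c • a⟫ - ⟪q, f b - c • b⟫ ≤ c * ‖q‖ * ‖b - a‖ :=
    sub_le_mul_norm_of_forall_isProximalSubgradient hV hconv (by fun_prop) (by positivity)
      (hsub' q) ha hb
  have hq_inner : ⟪q, f a - c • a⟫ - ⟪q, f b - c • b⟫ = ‖q‖ * ‖q‖ := by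
    rw [← inner_sub_right, ← real_inner_self_eq_norm_mul_norm]
    congr 1
    rw [hq]; module
  rw [mul_norm_sq_le_inner_iff hlam, ← hc, ← hq]
  rcases (norm_nonneg q).eq_or_lt with hq0 | hq0
  · rw [← hq0]; positivity
  · rw [hq_inner, norm_sub_rev b a] at hmean
    exact le_of_mul_le_mul_left (by linarith) hq0

end Proximal

section LocalMaximality

variable {E : Type*} [NormedAddCommGroup E] [InnerProductSpace ℝ E]

/-- The coordinate `(x, v) ↦ v + μ x` in which the graph of a `ρ`-strongly monotone operator,
`0 < ρ + μ`, becomes the graph of a Lipschitz map `v + μ x ↦ x` (its resolvent). -/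
def mintyMap (μ : ℝ) : E × E →L[ℝ] E :=
  .snd ℝ E E + μ • .fst ℝ E E

lemma mintyMap_sub_mintyMap (μ : ℝ) (p q : E × E) :
    mintyMap μ p - mintyMap μ q = (p.2 - q.2) + μ • (p.1 - q.1) := by
  rw [← map_sub]; rfl

lemma inner_mintyMap_sub_mintyMap (μ : ℝ) (p q : E × E) :
    ⟪mintyMap μ p - mintyMap μ q, p.1 - q.1⟫ =
      ⟪p.2 - q.2, p.1 - q.1⟫ + μ * ‖p.1 - q.1‖ ^ 2 := by
  rw [mintyMap_sub_mintyMap, inner_add_left, real_inner_smul_left, real_inner_self_eq_norm_sq]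

lemma IsStrMono.mul_norm_fst_sub_le {ρ : ℝ} {M : Set (E × E)} (hM : IsStrMono ρ M) (μ : ℝ)
    {p q : E × E} (hp : p ∈ M) (hq : q ∈ M) :
    (ρ + μ) * ‖p.1 - q.1‖ ≤ ‖mintyMap μ p - mintyMap μ q‖ := by
  rcases (norm_nonneg (p.1 - q.1)).eq_or_lt with h | h
  · rw [← h, mul_zero]; exact norm_nonneg _
  refine le_of_mul_le_mul_right ?_ h
  linarith [hM p hp q hq, inner_mintyMap_sub_mintyMap μ p q,
    real_inner_le_norm (mintyMap μ p - mintyMap μ q) (p.1 - q.1)]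

lemma IsStrMono.exists_antilipschitzWith_mintyMap {ρ μ : ℝ} {M : Set (E × E)}
    (hM : IsStrMono ρ M) (hρ : 0 < ρ + μ) :
    ∃ K, AntilipschitzWith K (M.domRestrict (mintyMap μ)) := by
  set K := 1 / (ρ + μ) with hK
  have : 0 < K := by positivity
  refine ⟨⟨1 + (1 + |μ|) * K, by positivity⟩, .of_le_mul_dist fun ⟨p, hp⟩ ⟨q, hq⟩ => ?_⟩
  set d := mintyMap μ p - mintyMap μ q with hd
  have hfst : ‖p.1 - q.1‖ ≤ K * ‖d‖ := by
    rw [hK, one_div_mul_eq_div, le_div_iff₀' hρ]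
    exact hM.mul_norm_fst_sub_le μ hp hq
  have hsnd : ‖p.2 - q.2‖ ≤ ‖d‖ + |μ| * ‖p.1 - q.1‖ := by
    have : p.2 - q.2 = d - μ • (p.1 - q.1) := by
      rw [hd, mintyMap_sub_mintyMap, add_sub_cancel_right]
    rw [this, ← Real.norm_eq_abs, ← norm_smul]
    exact norm_sub_le _ _
  simp only [Subtype.dist_eq, domRestrict_apply, dist_eq_norm, ← hd]
  calc ‖p - q‖ ≤ ‖p.1 - q.1‖ + ‖p.2 - q.2‖ := max_le_add_of_nonneg (norm_nonneg _) (norm_nonneg _)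
    _ ≤ ‖d‖ + (1 + |μ|) * ‖p.1 - q.1‖ := by linarith
    _ ≤ ‖d‖ + (1 + |μ|) * (K * ‖d‖) := by gcongr
    _ = (1 + (1 + |μ|) * K) * ‖d‖ := by ring

lemma IsStrMono.injOn_mintyMap {ρ μ : ℝ} {M : Set (E × E)} (hM : IsStrMono ρ M)
    (hρ : 0 < ρ + μ) : InjOn (mintyMap μ) M :=
  let ⟨_, hK⟩ := hM.exists_antilipschitzWith_mintyMap hρ
  injOn_iff_injective.2 hK.injective

lemma IsStrMono.isClosed_image_mintyMap {ρ μ : ℝ} {M : Set (X × X)} (hM : IsStrMono ρ M)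
    (hρ : 0 < ρ + μ) (hM_closed : IsClosed M) : IsClosed (mintyMap μ '' M) := by
  obtain ⟨K, hK⟩ := hM.exists_antilipschitzWith_mintyMap hρ
  have := hM_closed.completeSpace_coe
  have huc : UniformContinuous (M.domRestrict (mintyMap μ)) :=
    (mintyMap (E := X) μ).lipschitz.uniformContinuous.comp uniformContinuous_subtype_val
  rw [← range_domRestrict]
  exact hK.isClosed_range huc

lemma mem_rnc_of_eventually_le {Ω : Set (E × E)} {p n : E × E} {C : ℝ}
    (h : ∀ᶠ u in 𝓝[Ω] p, ⟪n.1, u.1 - p.1⟫ + ⟪n.2, u.2 - p.2⟫ ≤ C * ‖u - p‖ ^ 2) :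
    n ∈ rnc Ω p := by
  intro ε hε
  have hsmall : ∀ᶠ u in 𝓝[Ω] p, C * ‖u - p‖ < ε := by
    have hcont : Continuous fun u => C * ‖u - p‖ := by fun_prop
    exact nhdsWithin_le_nhds ((hcont.tendsto' p 0 (by simp)).eventually_lt_const hε)
  filter_upwards [h, hsmall] with u hu hlt
  calc ⟪n.1, u.1 - p.1⟫ + ⟪n.2, u.2 - p.2⟫ ≤ C * ‖u - p‖ * ‖u - p‖ := by rwa [mul_assoc, ← sq]
    _ ≤ ε * ‖u - p‖ := by gcongr
    _ ≤ ε * (‖u.1 - p.1‖ + ‖u.2 - p.2‖) := by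
        gcongr
        exact max_le_add_of_nonneg (norm_nonneg _) (norm_nonneg _)

lemma CoderivLowerBound.mul_norm_sq_le_inner {σ : ℝ} {Ω : Set (E × E)} {p : E × E}
    (hp : CoderivLowerBound σ Ω p) {μ C : ℝ} {q w : E}
    (h : ∀ᶠ p' in 𝓝[Ω] p, ⟪w, mintyMap μ p' - mintyMap μ p⟫ - ⟪q, p'.1 - p.1⟫ ≤
      C * ‖mintyMap μ p' - mintyMap μ p‖ ^ 2) :
    (σ + μ) * ‖w‖ ^ 2 ≤ ⟪q, w⟫ := by
  have hnormal : (μ • w - q, - -w) ∈ rnc Ω p := by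
    refine mem_rnc_of_eventually_le (C := |C| * ‖mintyMap (E := E) μ‖ ^ 2) (h.mono fun p' hp' => ?_)
    calc ⟪μ • w - q, p'.1 - p.1⟫ + ⟪- -w, p'.2 - p.2⟫
        = ⟪w, mintyMap μ p' - mintyMap μ p⟫ - ⟪q, p'.1 - p.1⟫ := by
          rw [mintyMap_sub_mintyMap, inner_add_right, real_inner_smul_right, inner_sub_left,
            real_inner_smul_left, neg_neg]
          ring
      _ ≤ |C| * ‖mintyMap μ (p' - p)‖ ^ 2 := by
          rw [map_sub]; exact hp'.trans (by gcongr; exact le_abs_self C)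
      _ ≤ |C| * (‖mintyMap (E := E) μ‖ * ‖p' - p‖) ^ 2 := by
          gcongr; exact (mintyMap (E := E) μ).le_opNorm _
      _ = |C| * ‖mintyMap (E := E) μ‖ ^ 2 * ‖p' - p‖ ^ 2 := by ring
  have hle := hp (-w) _ hnormal
  rw [norm_neg, inner_neg_right, inner_sub_left, real_inner_smul_left,
    real_inner_self_eq_norm_sq] at hle
  linarith

lemma IsStrMono.sUnion {σ : ℝ} {c : Set (Set (E × E))} (hc : ∀ M ∈ c, IsStrMono σ M)
    (hchain : IsChain (· ⊆ ·) c) : IsStrMono σ (⋃₀ c) := by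
  rintro p ⟨A, hA, hpA⟩ q ⟨B, hB, hqB⟩
  rcases hchain.total hA hB with hAB | hBA
  · exact hc B hB p (hAB hpA) q hqB
  · exact hc A hA p hpA q (hBA hqB)

lemma IsStrMono.exists_strMaxMono {σ : ℝ} {M : Set (E × E)} (hM : IsStrMono σ M) :
    ∃ G : E → Set E, StrMaxMono σ G ∧ M ⊆ gph G := by
  obtain ⟨N, hMN, hN⟩ := zorn_subset_nonempty {N : Set (E × E) | IsStrMono σ N}
    (fun c hc hchain _ => ⟨⋃₀ c, .sUnion hc hchain, fun _ => subset_sUnion_of_mem⟩) M hM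
  refine ⟨fun x => {v | (x, v) ∈ N}, ⟨hN.prop, fun S hS hsub => ?_⟩, hMN⟩
  exact (hN.le_of_ge hS hsub).antisymm hsub

lemma IsStrMono.isOpen_image_mintyMap {ρ σ μ : ℝ} {Ω O : Set (X × X)} (hmono : IsStrMono ρ Ω)
    (hρ : 0 < ρ + μ) (hσ : 0 < σ + μ) (hΩ : IsClosed Ω) (hO : IsOpen O)
    (hbound : ∀ p ∈ Ω ∩ O, CoderivLowerBound σ Ω p) : IsOpen (mintyMap μ '' (Ω ∩ O)) := by
  have himage : mintyMap μ '' (Ω ∩ O) = mintyMap μ '' Ω ∩ (mintyMap μ '' (Ω \ O))ᶜ := by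
    rw [← sdiff_sdiff_right_self, (hmono.injOn_mintyMap hρ).image_sdiff_subset sdiff_subset,
      sdiff_eq]
  have hclosed : IsClosed (mintyMap μ '' (Ω \ O)) :=
    (hmono.mono sdiff_subset).isClosed_image_mintyMap hρ (hΩ.sdiff hO)
  rw [himage]
  refine isOpen_inter_of_forall_isProximalNormal_eq_zero (hmono.isClosed_image_mintyMap hρ hΩ)
    hclosed.isOpen_compl fun s hs w hw => ?_
  rw [← himage] at hs
  obtain ⟨p, hp, rfl⟩ := hs
  obtain ⟨C, hC⟩ := hw
  have hpull := (mintyMap μ).continuous.continuousWithinAt.tendsto_nhdsWithin_image.eventually hC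
  have hle : (σ + μ) * ‖w‖ ^ 2 ≤ ⟪(0 : X), w⟫ :=
    (hbound p hp).mul_norm_sq_le_inner (hpull.mono fun p' hp' => by simpa using hp')
  rw [inner_zero_left] at hle
  by_contra hw0
  have : 0 < ‖w‖ := norm_pos_iff.2 hw0
  exact hle.not_gt (by positivity)

lemma IsStrMono.inter_preimage_mintyMap {ρ σ μ : ℝ} {Ω : Set (X × X)} (hmono : IsStrMono ρ Ω)
    (hρ : 0 < ρ + μ) (hσ : 0 < σ + μ) {V : Set X} (hV : IsOpen V) (hconv : Convex ℝ V)
    (hsurj : SurjOn (mintyMap μ) Ω V)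
    (hbound : ∀ p ∈ Ω, mintyMap μ p ∈ V → CoderivLowerBound σ Ω p) :
    IsStrMono σ (Ω ∩ mintyMap μ ⁻¹' V) := by
  obtain ⟨K, hK⟩ := hmono.exists_antilipschitzWith_mintyMap hρ
  set g := Function.invFunOn (mintyMap μ) Ω
  have hg_maps : MapsTo g V Ω := hsurj.mapsTo_invFunOn
  have hg_right : RightInvOn g (mintyMap μ) V := hsurj.rightInvOn_invFunOn
  have hg_left : LeftInvOn g (mintyMap μ) Ω := (hmono.injOn_mintyMap hρ).leftInvOn_invFunOn
  have hg_cont : ContinuousOn g V :=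
    continuousOn_iff_continuous_domRestrict.2 (hK.to_rightInvOn' hg_maps hg_right).continuous
  intro p hp q hq
  have hcoc := mul_norm_sub_sq_le_inner_of_forall_isProximalSubgradient (f := fun y => (g y).1)
    hV hconv hg_cont.fst hσ (fun y hy e w ⟨C, hC⟩ => ?_) hp.2 hq.2
  · simp only [hg_left hp.1, hg_left hq.1, inner_mintyMap_sub_mintyMap] at hcoc
    linarith
  · have hy' : mintyMap μ (g y) = y := hg_right hy
    refine (hbound (g y) (hg_maps hy) (by rwa [hy'])).mul_norm_sq_le_inner (μ := μ) (C := C) ?_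
    rw [hy']
    have hpull : Tendsto (mintyMap μ) (𝓝[Ω] (g y)) (𝓝 y) := by
      simpa only [hy'] using ((mintyMap μ).continuous.tendsto (g y)).mono_left nhdsWithin_le_nhds
    filter_upwards [self_mem_nhdsWithin, hpull.eventually hC] with p' hp' hle
    rw [hg_left hp'] at hle
    rw [inner_sub_right e]
    linarith

lemma IsStrMono.exists_strMaxMono_eventuallyEq {ρ σ : ℝ} {Ω O : Set (X × X)}
    (hmono : IsStrMono ρ Ω) (hΩ : IsClosed Ω) (hO : IsOpen O)
    (hbound : ∀ p ∈ Ω ∩ O, CoderivLowerBound σ Ω p) {p : X × X} (hp : p ∈ Ω ∩ O) :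
    ∃ G : X → Set X, StrMaxMono σ G ∧ gph G =ᶠ[𝓝 p] Ω := by
  set μ := |ρ| + |σ| + 1
  have hρμ : 0 < ρ + μ := by linarith [neg_abs_le ρ, abs_nonneg σ]
  have hσμ : 0 < σ + μ := by linarith [neg_abs_le σ, abs_nonneg ρ]
  obtain ⟨R, hR, hball⟩ := Metric.isOpen_iff.1
    (hmono.isOpen_image_mintyMap hρμ hσμ hΩ hO hbound) _ (mem_image_of_mem (mintyMap μ) hp)
  set V := Metric.ball (mintyMap μ p) R
  have hboundV (q : X × X) (hq : q ∈ Ω) (hqV : mintyMap μ q ∈ V) : CoderivLowerBound σ Ω q := by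
    obtain ⟨q', hq', heq⟩ := hball hqV
    exact hmono.injOn_mintyMap hρμ hq'.1 hq heq ▸ hbound q' hq'
  obtain ⟨G, hG, hsub⟩ := (hmono.inter_preimage_mintyMap hρμ hσμ Metric.isOpen_ball
    (convex_ball _ R) (hball.trans (image_mono inter_subset_left)) hboundV).exists_strMaxMono
  have hG_mono : IsStrMono σ (gph G) := hG.1
  have hnear : ∀ᶠ q in 𝓝 p, mintyMap μ q ∈ V :=
    (mintyMap μ).continuous.continuousAt (Metric.ball_mem_nhds _ hR)
  refine ⟨G, hG, eventuallyEq_set.2 ?_⟩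
  filter_upwards [hnear] with q hqV
  refine ⟨fun hq => ?_, fun hq => hsub ⟨hq, hqV⟩⟩
  obtain ⟨q', hq', heq⟩ := hball hqV
  have hq'G : q' ∈ gph G := hsub ⟨hq'.1, by rwa [mem_preimage, heq]⟩
  exact hG_mono.injOn_mintyMap hσμ hq'G hq heq ▸ hq'.1

lemma LocClosedAt.exists_strMaxMono_eventuallyEq {ρ σ : ℝ} {Ω W₁ W₂ : Set (X × X)} {p : X × X}
    (hΩ : LocClosedAt Ω p) (hp : p ∈ Ω) (hW₁ : W₁ ∈ 𝓝 p) (hmono : IsStrMono ρ (Ω ∩ W₁))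
    (hW₂ : W₂ ∈ 𝓝 p) (hbound : ∀ q ∈ Ω ∩ W₂, CoderivLowerBound σ Ω q) :
    ∃ G : X → Set X, StrMaxMono σ G ∧ gph G =ᶠ[𝓝 p] Ω := by
  obtain ⟨ε, hε, hclosed⟩ := hΩ
  obtain ⟨δ, hδ, hball⟩ := Metric.nhds_basis_closedBall.mem_iff.1
    (inter_mem (inter_mem hW₁ hW₂) (Metric.closedBall_mem_nhds p hε))
  have hclosed_δ : IsClosed (Ω ∩ Metric.closedBall p δ) := by
    rw [← inter_eq_right.2 (hball.trans inter_subset_right), ← inter_assoc]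
    exact hclosed.inter Metric.isClosed_closedBall
  have hlocal (q : X × X) (hq : q ∈ Metric.ball p δ) :
      (Ω ∩ Metric.closedBall p δ : Set (X × X)) =ᶠ[𝓝 q] Ω := by
    refine eventuallyEq_set.2 ?_
    filter_upwards [Metric.closedBall_mem_nhds_of_mem hq] with q' hq' using and_iff_left hq'
  have hmono_δ : IsStrMono ρ (Ω ∩ Metric.closedBall p δ) :=
    hmono.mono fun q hq => ⟨hq.1, (hball hq.2).1.1⟩
  obtain ⟨G, hG, heq⟩ := hmono_δ.exists_strMaxMono_eventuallyEq hclosed_δ Metric.isOpen_ball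
    (fun q hq => (coderivLowerBound_congr (hlocal q hq.2)).2
      (hbound q ⟨hq.1.1, (hball hq.1.2).1.2⟩))
    ⟨⟨hp, Metric.mem_closedBall_self hδ.le⟩, Metric.mem_ball_self hδ⟩
  exact ⟨G, hG, heq.trans (hlocal p (Metric.mem_ball_self hδ))⟩

lemma locStrMaxBAt_iff_eventuallyEq {σ : ℝ} {T : E → Set E} {x v : E} :
    LocStrMaxBAt σ T x v ↔ ∃ G, StrMaxMono σ G ∧ gph G =ᶠ[𝓝 (x, v)] gph T := by
  constructor
  · rintro ⟨U, hU, V, hV, G, hG, heq⟩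
    refine ⟨G, hG, eventuallyEq_set.2 ?_⟩
    filter_upwards [prod_mem_nhds hU hV] with p hp
    simpa only [mem_inter_iff, hp, and_true] using Set.ext_iff.1 heq p
  · rintro ⟨G, hG, heq⟩
    obtain ⟨U, hU, V, hV, hUV⟩ := mem_nhds_prod_iff.1 (eventuallyEq_set.1 heq)
    exact ⟨U, hU, V, hV, G, hG, Set.ext fun p => and_congr_left fun hp => hUV hp⟩

lemma hypoOn_iff_isStrMono {r : ℝ} {T : E → Set E} {W : Set (E × E)} :
    HypoOn r T W ↔ IsStrMono (-r) (gph T ∩ W) := by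
  simp only [HypoOn, IsStrMono, neg_mul]

end LocalMaximality

theorem stmt_19_general (σ : ℝ) (T : X → Set X) (xbar vbar : X)
    (hx : vbar ∈ T xbar) (hcl : LocClosedAt (gph T) (xbar, vbar)) :
    LocStrMaxBAt σ T xbar vbar ↔
      ((∃ r > 0, LocHypoAt r T xbar vbar) ∧
        ∃ W ∈ 𝓝 ((xbar, vbar) : X × X), ∀ p ∈ gph T ∩ W, ∀ w z : X,
          z ∈ coderiv T p.1 p.2 w → σ * ‖w‖ ^ 2 ≤ ⟪z, w⟫) := by
  rw [locStrMaxBAt_iff_eventuallyEq]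
  constructor
  · rintro ⟨G, hG, heq⟩
    have hnear := eventually_eventuallyEq_nhds.2 heq
    refine ⟨⟨|σ| + 1, by positivity, _, heq.mem_iff, hypoOn_iff_isStrMono.2 ?_⟩,
      _, hnear, fun p hp => ?_⟩
    · have hG_mono : IsStrMono σ (gph G) := hG.1
      exact (hG_mono.mono fun p hp => hp.2.2 hp.1).mono_modulus (by linarith [neg_abs_le σ])
    · have hpG : p ∈ gph G := hp.2.mem_iff.self_of_nhds.2 hp.1
      exact (coderivLowerBound_congr hp.2).1 (hG.coderivLowerBound hpG)
  · rintro ⟨⟨r, -, W₁, hW₁, hhypo⟩, W₂, hW₂, hbound⟩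
    exact hcl.exists_strMaxMono_eventuallyEq hx hW₁ (hypoOn_iff_isStrMono.1 hhypo) hW₂ hbound

/-- Coderivative characterization of local strong maximal monotonicity with modulus σ. -/
theorem stmt_19 (σ : ℝ) (hσ : 0 < σ) (T : X → Set X) (xbar vbar : X)
    (hx : vbar ∈ T xbar) (hcl : LocClosedAt (gph T) (xbar, vbar)) :
    LocStrMaxBAt σ T xbar vbar ↔
      ((∃ r > 0, LocHypoAt r T xbar vbar) ∧
        ∃ W ∈ 𝓝 ((xbar, vbar) : X × X), ∀ p ∈ gph T ∩ W, ∀ w z : X,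
          z ∈ coderiv T p.1 p.2 w → σ * ‖w‖ ^ 2 ≤ ⟪z, w⟫) :=
  stmt_19_general σ T xbar vbar hx hcl
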